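/- arXiv:2212.13859 — 6 statements merged into one kernel-verified Lean document; each statement's English description precedes it below -/
import Mathlib

section
/- Let k, α, θ ∈ ℝ with sin(4α) ≥ 0, and set A = cos(4α), B = sin(θ). Then Tr(U_YY(k))/2 equals (as a complex number, with real right-hand side coerced to ℂ): (11−A)/16 + cos(2k)·(1+A)/4 + cos(4k)·(1−3A)/16 + sin⁴(k)·((1+A)/2)·(1−2B²) + sin³(k)·cos(k)·2B·√(1−A²). -/
open Matrix Filter Topology

noncomputable def σx : Matrix (Fin 2) (Fin 2) ℂ := !![0, 1; 1, 0]
noncomputable def σy : Matrix (Fin 2) (Fin 2) ℂ := !![0, -Complex.I; Complex.I, 0]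
noncomputable def σz : Matrix (Fin 2) (Fin 2) ℂ := !![1, 0; 0, -1]

/-- Rotation about the x-axis by angle `t`. -/
noncomputable def Rx (t : ℝ) : Matrix (Fin 2) (Fin 2) ℂ :=
  !![(Real.cos (t/2) : ℂ), -Complex.I * Real.sin (t/2);
     -Complex.I * Real.sin (t/2), (Real.cos (t/2) : ℂ)]

/-- Rotation about the y-axis by angle `t`. -/
noncomputable def Ry (t : ℝ) : Matrix (Fin 2) (Fin 2) ℂ :=
  !![(Real.cos (t/2) : ℂ), -(Real.sin (t/2) : ℂ);
     (Real.sin (t/2) : ℂ), (Real.cos (t/2) : ℂ)]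

/-- Rotation about the z-axis by angle `t`. -/
noncomputable def Rz (t : ℝ) : Matrix (Fin 2) (Fin 2) ℂ :=
  !![Complex.exp (-(Complex.I * t) / 2), 0; 0, Complex.exp ((Complex.I * t) / 2)]

/-- Fourier-space shift operator at momentum `κ`. -/
noncomputable def Sh (κ : ℝ) : Matrix (Fin 2) (Fin 2) ℂ :=
  !![Complex.exp (Complex.I * κ), 0; 0, Complex.exp (-(Complex.I * κ))]

/-- The coin operator `Cα`. -/
noncomputable def Calpha (α : ℝ) : Matrix (Fin 2) (Fin 2) ℂ :=
  !![(Real.sin α : ℂ), -Complex.I * Real.cos α;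
     Complex.I * Real.cos α, -(Real.sin α : ℂ)]

/-- The coin operator `Cβ`. -/
noncomputable def Cbeta (α : ℝ) : Matrix (Fin 2) (Fin 2) ℂ :=
  !![-(Real.cos α : ℂ), -Complex.I * Real.sin α;
     -Complex.I * Real.sin α, -(Real.cos α : ℂ)]

/-- The massless homogeneous Y–Y twisted quantum walk unitary at momentum `k`,
coin angle `α` and twist angle `θ`: `U_YY = (W_β · W_α)²` with
`W_α = S(k)·Cα` and `W_β = R_y(−θ)·S(k)·R_y(θ)·Cβ`. -/
noncomputable def UYY (k α θ : ℝ) : Matrix (Fin 2) (Fin 2) ℂ :=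
  (Ry (-θ) * Sh k * Ry θ * Cbeta α * (Sh k * Calpha α)) *
    (Ry (-θ) * Sh k * Ry θ * Cbeta α * (Sh k * Calpha α))

/-!
Since `U_YY` is the square of `T = W_β · W_α`, the Cayley–Hamilton identity gives
`Tr U_YY = (Tr T)² - 2 det T`. The determinant of `T` is `-1` because every factor has
determinant `1` except `Cα = σy · R_x(-2α)`.

For the trace, `Cβ = -R_x(-2α)`, so cyclicity brings both coins around the twisted shift:
`Tr T = -Tr (R_x(-2α) V R_x(-2α) · S(k) σy)` with
`V = R_y(-θ) S(k) R_y(θ) = cos k + i sin k (cos θ σz - sin θ σx)`.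
The rotations about `x` add up on the components of `V` along `1` and `σx`, and cancel on the one
along `σz`, which anticommutes with `σx`. Only the angle `2α` survives, and `Tr T` is `2i` times
a real number.
-/

lemma trace_mul_self_fin_two {R : Type*} [CommRing R] (M : Matrix (Fin 2) (Fin 2) R) :
    (M * M).trace = M.trace ^ 2 - 2 * M.det := by
  simp only [trace_fin_two, det_fin_two, mul_apply, Fin.sum_univ_two]
  ring

lemma det_σy : σy.det = -1 := by
  simp [σy]

lemma Rx_zero : Rx 0 = 1 := by
  simp [Rx, one_fin_two]

lemma Ry_zero : Ry 0 = 1 := by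
  simp [Ry, one_fin_two]

lemma Rx_mul_Rx (s t : ℝ) : Rx s * Rx t = Rx (s + t) := by
  simp only [Rx, mul_fin_two, add_div, Real.cos_add, Real.sin_add, Complex.ofReal_add,
    Complex.ofReal_sub, Complex.ofReal_mul]
  congrm !![?_, ?_; ?_, ?_] <;> grind [Complex.I_sq]

lemma Ry_mul_Ry (s t : ℝ) : Ry s * Ry t = Ry (s + t) := by
  simp only [Ry, mul_fin_two, add_div, Real.cos_add, Real.sin_add, Complex.ofReal_add,
    Complex.ofReal_sub, Complex.ofReal_mul]
  congrm !![?_, ?_; ?_, ?_] <;> ring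

lemma det_Rx (t : ℝ) : (Rx t).det = 1 := by
  rw [Rx, det_fin_two_of, Complex.ofReal_cos, Complex.ofReal_sin]
  linear_combination Complex.cos_sq_add_sin_sq (↑(t / 2)) -
    Complex.sin ↑(t / 2) ^ 2 * Complex.I_sq

lemma det_Ry (t : ℝ) : (Ry t).det = 1 := by
  rw [Ry, det_fin_two_of, Complex.ofReal_cos, Complex.ofReal_sin]
  linear_combination Complex.cos_sq_add_sin_sq (↑(t / 2))

lemma det_Sh (κ : ℝ) : (Sh κ).det = 1 := by
  simp [Sh, ← Complex.exp_add]

lemma σz_mul_Rx (t : ℝ) : σz * Rx t = Rx (-t) * σz := by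
  simp [σz, Rx, neg_div]

lemma σz_mul_Ry (t : ℝ) : σz * Ry t = Ry (-t) * σz := by
  simp [σz, Ry, neg_div]

lemma σx_mul_Rx (t : ℝ) : σx * Rx t = Rx t * σx := by
  simp [σx, Rx]

lemma Ry_mul_σz (t : ℝ) :
    Ry t * σz = (Real.cos (t / 2) : ℂ) • σz + (Real.sin (t / 2) : ℂ) • σx := by
  simp [σx, σz, Ry]

lemma Cbeta_eq_neg_Rx (α : ℝ) : Cbeta α = -Rx (-(2 * α)) := by
  simp [Cbeta, Rx, neg_div]

lemma Calpha_eq_σy_mul_Rx (α : ℝ) : Calpha α = σy * Rx (-(2 * α)) := by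
  simp [Calpha, Rx, σy, neg_div, ← mul_assoc]

lemma Sh_eq_cos_add_sin_smul_σz (κ : ℝ) :
    Sh κ = (Real.cos κ : ℂ) • 1 + (Complex.I * Real.sin κ) • σz := by
  rw [Sh, mul_comm, ← neg_mul, Complex.exp_mul_I, Complex.exp_mul_I, Complex.cos_neg,
    Complex.sin_neg]
  simp [σz, one_fin_two, mul_comm Complex.I]

lemma Sh_mul_σy (κ : ℝ) :
    Sh κ * σy = (Real.cos κ : ℂ) • σy + (Real.sin κ : ℂ) • σx := by
  have σz_mul_σy : σz * σy = -Complex.I • σx := by simp [σx, σy, σz]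
  rw [Sh_eq_cos_add_sin_smul_σz, add_mul, smul_mul_assoc, smul_mul_assoc, one_mul, σz_mul_σy,
    smul_smul, show Complex.I * Real.sin κ * -Complex.I = (Real.sin κ : ℂ) by
      linear_combination -(Real.sin κ : ℂ) * Complex.I_sq]

lemma Ry_neg_mul_σz_mul_Ry (t : ℝ) :
    Ry (-t) * σz * Ry t = (Real.cos t : ℂ) • σz - (Real.sin t : ℂ) • σx := by
  rw [mul_assoc, σz_mul_Ry, ← mul_assoc, Ry_mul_Ry, Ry_mul_σz, show (-t + -t) / 2 = -t by ring,
    Real.cos_neg, Real.sin_neg, Complex.ofReal_neg, neg_smul, sub_eq_add_neg]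

lemma Ry_neg_mul_Sh_mul_Ry (k θ : ℝ) :
    Ry (-θ) * Sh k * Ry θ = (Real.cos k : ℂ) • 1 +
      (Complex.I * Real.sin k * Real.cos θ) • σz - (Complex.I * Real.sin k * Real.sin θ) • σx := by
  rw [Sh_eq_cos_add_sin_smul_σz, mul_add, add_mul, mul_smul_comm, mul_smul_comm, smul_mul_assoc,
    smul_mul_assoc, Ry_neg_mul_σz_mul_Ry, mul_one, Ry_mul_Ry, neg_add_cancel, Ry_zero]
  module

lemma Rx_mul_σz_mul_Rx (t : ℝ) : Rx t * σz * Rx t = σz := by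
  rw [mul_assoc, σz_mul_Rx, ← mul_assoc, Rx_mul_Rx, add_neg_cancel, Rx_zero, one_mul]

lemma Rx_mul_σx_mul_Rx (t : ℝ) : Rx t * σx * Rx t = Rx (t + t) * σx := by
  rw [mul_assoc, σx_mul_Rx, ← mul_assoc, Rx_mul_Rx]

lemma trace_Rx_mul_Sh_mul_σy (t κ : ℝ) :
    (Rx t * (Sh κ * σy)).trace = -(2 * Complex.I * Real.sin (t / 2) * Real.sin κ) := by
  have trace_σy : (Rx t * σy).trace = 0 := by
    rw [Rx, σy, mul_fin_two, trace_fin_two_of]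
    ring
  have trace_σx : (Rx t * σx).trace = -(2 * Complex.I * Real.sin (t / 2)) := by
    rw [Rx, σx, mul_fin_two, trace_fin_two_of]
    ring
  rw [Sh_mul_σy, mul_add, trace_add, mul_smul_comm, mul_smul_comm, trace_smul, trace_smul,
    trace_σy, trace_σx, smul_zero, zero_add, smul_eq_mul]
  ring

lemma trace_Rx_mul_σx_mul_Sh_mul_σy (t κ : ℝ) :
    (Rx t * σx * (Sh κ * σy)).trace = 2 * Real.cos (t / 2) * Real.sin κ := by
  have trace_σy : (Rx t * σx * σy).trace = 0 := by
    rw [Rx, σx, σy, mul_fin_two, mul_fin_two, trace_fin_two_of]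
    ring
  have trace_σx : (Rx t * σx * σx).trace = 2 * Real.cos (t / 2) := by
    rw [Rx, σx, mul_fin_two, mul_fin_two, trace_fin_two_of]
    ring
  rw [Sh_mul_σy, mul_add, trace_add, mul_smul_comm, mul_smul_comm, trace_smul, trace_smul,
    trace_σy, trace_σx, smul_zero, zero_add, smul_eq_mul]
  ring

lemma trace_σz_mul_Sh_mul_σy (κ : ℝ) : (σz * (Sh κ * σy)).trace = 0 := by
  simp [Sh, σy, σz]

/-- The half period `W_β · W_α` of the Y–Y twisted walk, of which `UYY` is the square. -/
noncomputable def halfUYY (k α θ : ℝ) : Matrix (Fin 2) (Fin 2) ℂ :=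
  Ry (-θ) * Sh k * Ry θ * Cbeta α * (Sh k * Calpha α)

lemma det_halfUYY (k α θ : ℝ) : (halfUYY k α θ).det = -1 := by
  simp [halfUYY, Cbeta_eq_neg_Rx, Calpha_eq_σy_mul_Rx, det_neg, det_Rx, det_Ry, det_Sh, det_σy]

lemma trace_halfUYY_eq_neg_trace_Rx_mul_mul_Rx (k α θ : ℝ) :
    (halfUYY k α θ).trace =
      -(Rx (-(2 * α)) * (Ry (-θ) * Sh k * Ry θ) * Rx (-(2 * α)) * (Sh k * σy)).trace := by
  rw [halfUYY, Cbeta_eq_neg_Rx, Calpha_eq_σy_mul_Rx, mul_neg, neg_mul, trace_neg,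
    ← mul_assoc (Sh k) σy, ← mul_assoc, trace_mul_comm]
  simp only [mul_assoc]

lemma trace_halfUYY (k α θ : ℝ) :
    (halfUYY k α θ).trace = 2 * Complex.I *
      ((Real.sin k * (Real.sin k * Real.sin θ * Real.cos (2 * α)
        - Real.cos k * Real.sin (2 * α)) : ℝ) : ℂ) := by
  rw [trace_halfUYY_eq_neg_trace_Rx_mul_mul_Rx, Ry_neg_mul_Sh_mul_Ry]
  simp only [mul_add, add_mul, mul_sub, sub_mul, mul_smul_comm, smul_mul_assoc, mul_one,
    Rx_mul_Rx, Rx_mul_σz_mul_Rx, Rx_mul_σx_mul_Rx, trace_add, trace_sub, trace_smul,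
    trace_Rx_mul_Sh_mul_σy, trace_σz_mul_Sh_mul_σy, trace_Rx_mul_σx_mul_Sh_mul_σy, smul_eq_mul]
  rw [show (-(2 * α) + -(2 * α)) / 2 = -(2 * α) by ring, Real.sin_neg, Real.cos_neg]
  push_cast
  ring

lemma trace_UYY_div_two_eq_one_sub (k α θ : ℝ) :
    (UYY k α θ).trace / 2 =
      ((1 - 2 * (Real.sin k * (Real.sin k * Real.sin θ * Real.cos (2 * α)
        - Real.cos k * Real.sin (2 * α))) ^ 2 : ℝ) : ℂ) := by
  rw [show UYY k α θ = halfUYY k α θ * halfUYY k α θ from rfl, trace_mul_self_fin_two,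
    trace_halfUYY, det_halfUYY, mul_pow, mul_pow, Complex.I_sq]
  push_cast
  ring

theorem trace_UYY_div_two_general (k α θ : ℝ) :
    (UYY k α θ).trace / 2 =
      (((11 - Real.cos (4 * α)) / 16
        + Real.cos (2 * k) * (1 + Real.cos (4 * α)) / 4
        + Real.cos (4 * k) * (1 - 3 * Real.cos (4 * α)) / 16
        + (Real.sin k) ^ 4 * ((1 + Real.cos (4 * α)) / 2) * (1 - 2 * (Real.sin θ) ^ 2)
        + (Real.sin k) ^ 3 * Real.cos k * (2 * Real.sin θ) * Real.sin (4 * α) : ℝ) : ℂ) := by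
  rw [trace_UYY_div_two_eq_one_sub, Complex.ofReal_inj, show 4 * α = 2 * (2 * α) by ring,
    show 4 * k = 2 * (2 * k) by ring, Real.cos_two_mul (2 * α), Real.sin_two_mul (2 * α),
    Real.cos_two_mul (2 * k), Real.cos_two_mul k]
  grind [Real.sin_sq_add_cos_sq k, Real.sin_sq_add_cos_sq (2 * α)]

/-- Closed form of `Tr(U_YY)/2` for the homogeneous Y–Y twisted walk. -/
theorem trace_UYY_div_two (k α θ : ℝ) (h : Real.sin (4*α) ≥ 0) :
    (UYY k α θ).trace / 2 =
      (((11 - Real.cos (4*α)) / 16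
        + Real.cos (2*k) * (1 + Real.cos (4*α)) / 4
        + Real.cos (4*k) * (1 - 3 * Real.cos (4*α)) / 16
        + (Real.sin k)^4 * ((1 + Real.cos (4*α)) / 2) * (1 - 2 * (Real.sin θ)^2)
        + (Real.sin k)^3 * Real.cos k * (2 * Real.sin θ)
            * Real.sqrt (1 - (Real.cos (4*α))^2) : ℝ) : ℂ) := by
  rw [trace_UYY_div_two_general, ← Real.sin_sq, Real.sqrt_sq h]
end

section
/- For all k, α, θ ∈ ℝ, the trace of the homogeneous Y–Y twisted walk unitary is π-periodic in the momentum: Tr(U_YY(k + π)) = Tr(U_YY(k)). In particular the Brillouin zone of the walk is the interval [−π/2, π/2]. -/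
open Matrix Filter Topology

/-!
The momentum enters only through the shift, and `S(k + π) = −S(k)`. Each of `W_α` and `W_β` contains
exactly one shift and so changes sign as well; the two signs cancel already in `W_β · W_α`.
-/

theorem Sh_antiperiodic : Function.Antiperiodic Sh Real.pi := by
  intro κ
  have hexp : Complex.exp (Complex.I * (κ + Real.pi)) = -Complex.exp (Complex.I * κ) := by
    simpa only [mul_comm Complex.I] using Complex.exp_mul_I_antiperiodic κ
  simp [Sh, Complex.exp_neg, hexp]

/-- The half-step `W_α = S(k)·Cα` of the walk, the right factor in `U_YY = (W_β · W_α)²`. -/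
noncomputable def Walpha (k α : ℝ) : Matrix (Fin 2) (Fin 2) ℂ :=
  Sh k * Calpha α

/-- The twisted half-step `W_β = R_y(−θ)·S(k)·R_y(θ)·Cβ` of the walk, the left factor in
`U_YY = (W_β · W_α)²`. -/
noncomputable def Wbeta (k α θ : ℝ) : Matrix (Fin 2) (Fin 2) ℂ :=
  Ry (-θ) * Sh k * Ry θ * Cbeta α

theorem UYY_eq_sq (k α θ : ℝ) : UYY k α θ = (Wbeta k α θ * Walpha k α) ^ 2 :=
  (sq _).symm

theorem Walpha_antiperiodic (α : ℝ) : Function.Antiperiodic (Walpha · α) Real.pi := by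
  intro k
  simp only [Walpha, Sh_antiperiodic k, neg_mul]

theorem Wbeta_antiperiodic (α θ : ℝ) : Function.Antiperiodic (Wbeta · α θ) Real.pi := by
  intro k
  simp only [Wbeta, Sh_antiperiodic k, neg_mul, mul_neg]

theorem UYY_periodic (α θ : ℝ) : Function.Periodic (UYY · α θ) Real.pi := by
  have hstep : Function.Periodic (fun k ↦ Wbeta k α θ * Walpha k α) Real.pi :=
    (Wbeta_antiperiodic α θ).mul (Walpha_antiperiodic α)
  simp only [UYY_eq_sq]
  exact hstep.comp (· ^ 2)

/-- The trace of the homogeneous Y–Y twisted walk unitary is π-periodic in the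
momentum, so the Brillouin zone is `[−π/2, π/2]`. -/
theorem trace_UYY_pi_periodic (k α θ : ℝ) :
    (UYY (k + Real.pi) α θ).trace = (UYY k α θ).trace :=
  (UYY_periodic α θ).comp trace k
end

section
/- Fix k, α₁, θ ∈ ℝ. For ε > 0 let d0(ε) = Re(Tr(U_YY(k·√ε)))/2, where the walk unitary U_YY is taken with coin angle α = α₁·√ε and twist angle θ. Then lim_{ε→0⁺} (1 − d0(ε))/ε² = 2·k²·(2α₁ − k·sin θ)². -/
open Matrix Filter Topology

/-!
Put `W = W_β W_α`, so `U_YY = W ^ 2`. Bracketing the factors of `W` as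
`(R_y(-θ) S R_y(θ)) (Cβ S Cα)`, the first group is the shift with its axis tilted from `z` towards
`-x`, and in the second the two coins cancel around the identity part of `S`, since `Cβ Cα = -σy`.
In Pauli coordinates the groups have determinants `1` and `-1`, and `tr W = 2 i h` with `h` real.
Hence `tr U_YY = (tr W) ^ 2 - 2 det W = 2 - 4 h ^ 2`, that is `1 - d0 = 2 h ^ 2`. At momentum `k x`
and coin angle `α x`, both factors of `h` vanish to first order at `x = 0`, so `h / x ^ 2` tends to
the product of their derivatives, and the limit is taken along `x = √ε`.
-/

theorem trace_sq_fin_two {R : Type*} [CommRing R] (A : Matrix (Fin 2) (Fin 2) R) :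
    (A ^ 2).trace = A.trace ^ 2 - 2 * A.det := by
  rw [sq, Matrix.trace_fin_two, Matrix.trace_fin_two, Matrix.det_fin_two]
  simp only [Matrix.mul_apply, Fin.sum_univ_two]
  ring

theorem tendsto_div_of_hasDerivAt_zero {𝕜 : Type*} [NontriviallyNormedField 𝕜] {f : 𝕜 → 𝕜} {f' : 𝕜}
    (hf : HasDerivAt f f' 0) (hf₀ : f 0 = 0) :
    Tendsto (fun x => f x / x) (𝓝[≠] 0) (𝓝 f') := by
  simpa [hf₀, div_eq_inv_mul] using hf.tendsto_slope_zero

theorem tendsto_sqrt_nhdsGT_zero : Tendsto Real.sqrt (𝓝[>] 0) (𝓝[>] 0) :=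
  tendsto_nhdsWithin_iff.2
    ⟨(Real.continuous_sqrt.tendsto' 0 0 Real.sqrt_zero).mono_left nhdsWithin_le_nhds,
      eventually_mem_nhdsWithin.mono fun _ => Real.sqrt_pos.2⟩

section PauliCoordinates

open Complex

/-- The combination `a + x σx + y σy + z σz`, with complex coefficients so that both the rotations
and the coins have this form and their products can be computed in coordinates. -/
noncomputable def pauli (a x y z : ℂ) : Matrix (Fin 2) (Fin 2) ℂ :=
  a • 1 + x • σx + y • σy + z • σz

theorem pauli_eq_of (a x y z : ℂ) :
    pauli a x y z = !![a + z, x - I * y; x + I * y, a - z] := by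
  ext i j
  fin_cases i <;> fin_cases j <;> simp [pauli, σx, σy, σz, sub_eq_add_neg, mul_comm]

theorem pauli_mul_pauli (a₁ x₁ y₁ z₁ a₂ x₂ y₂ z₂ : ℂ) :
    pauli a₁ x₁ y₁ z₁ * pauli a₂ x₂ y₂ z₂ =
      pauli (a₁ * a₂ + x₁ * x₂ + y₁ * y₂ + z₁ * z₂)
        (a₁ * x₂ + x₁ * a₂ + I * (y₁ * z₂ - z₁ * y₂))
        (a₁ * y₂ + y₁ * a₂ + I * (z₁ * x₂ - x₁ * z₂))
        (a₁ * z₂ + z₁ * a₂ + I * (x₁ * y₂ - y₁ * x₂)) := by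
  simp only [pauli_eq_of, Matrix.mul_fin_two, EmbeddingLike.apply_eq_iff_eq, Matrix.vecCons_inj]
  grind [I_sq]

theorem trace_pauli (a x y z : ℂ) : (pauli a x y z).trace = 2 * a := by
  rw [pauli_eq_of, Matrix.trace_fin_two_of]
  ring

theorem det_pauli (a x y z : ℂ) : (pauli a x y z).det = a ^ 2 - x ^ 2 - y ^ 2 - z ^ 2 := by
  rw [pauli_eq_of, Matrix.det_fin_two_of]
  linear_combination y ^ 2 * I_sq

theorem Sh_eq_pauli (κ : ℝ) : Sh κ = pauli (cos κ) 0 0 (I * sin κ) := by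
  have exp_pos : exp (I * κ) = cos κ + I * sin κ := by
    rw [mul_comm, exp_mul_I, mul_comm I]
  have exp_neg : exp (-(I * κ)) = cos κ - I * sin κ := by
    rw [mul_comm, ← neg_mul, exp_mul_I, cos_neg, sin_neg]
    ring
  simp [Sh, pauli_eq_of, exp_pos, exp_neg]

theorem Ry_eq_pauli (t : ℝ) : Ry t = pauli (cos (t / 2)) 0 (-(I * sin (t / 2))) 0 := by
  simp [Ry, pauli_eq_of, ← mul_assoc]

theorem Calpha_eq_pauli (α : ℝ) : Calpha α = pauli 0 0 (cos α) (sin α) := by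
  simp [Calpha, pauli_eq_of]

theorem Cbeta_eq_pauli (α : ℝ) : Cbeta α = pauli (-cos α) (-(I * sin α)) 0 0 := by
  simp [Cbeta, pauli_eq_of]

theorem Ry_neg_mul_Sh_mul_Ry_s7 (κ θ : ℝ) :
    Ry (-θ) * Sh κ * Ry θ =
      pauli (cos κ) (-(I * (sin κ * sin θ))) 0 (I * (sin κ * cos θ)) := by
  have cos_θ : cos θ = cos (θ / 2) ^ 2 - sin (θ / 2) ^ 2 := by
    rw [← cos_two_mul', mul_div_cancel₀ _ two_ne_zero]
  have sin_θ : sin θ = 2 * sin (θ / 2) * cos (θ / 2) := by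
    rw [← sin_two_mul, mul_div_cancel₀ _ two_ne_zero]
  rw [Ry_eq_pauli, Ry_eq_pauli, Sh_eq_pauli, pauli_mul_pauli, pauli_mul_pauli, ofReal_neg, neg_div,
    cos_neg, sin_neg, cos_θ, sin_θ]
  congr 1 <;> grind [cos_sq_add_sin_sq (θ / 2), I_sq]

theorem Cbeta_mul_Sh_mul_Calpha (κ α : ℝ) :
    Cbeta α * Sh κ * Calpha α =
      pauli (-(I * (sin κ * sin (2 * α)))) (-(sin κ * cos (2 * α))) (-cos κ) 0 := by
  rw [Cbeta_eq_pauli, Sh_eq_pauli, Calpha_eq_pauli, pauli_mul_pauli, pauli_mul_pauli, cos_two_mul',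
    sin_two_mul]
  congr 1 <;> grind [cos_sq_add_sin_sq α, I_sq]

end PauliCoordinates

/-- The real number `h` with `tr (W_β W_α) = 2 i h`. -/
noncomputable def halfTraceIm (k α θ : ℝ) : ℝ :=
  Real.sin k * (Real.sin k * Real.sin θ * Real.cos (2 * α) - Real.cos k * Real.sin (2 * α))

theorem Wbeta_mul_Walpha (k α θ : ℝ) :
    Wbeta k α θ * Walpha k α = (Ry (-θ) * Sh k * Ry θ) * (Cbeta α * Sh k * Calpha α) := by
  simp only [Wbeta, Walpha, Matrix.mul_assoc]

theorem trace_Wbeta_mul_Walpha (k α θ : ℝ) :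
    (Wbeta k α θ * Walpha k α).trace = 2 * Complex.I * halfTraceIm k α θ := by
  rw [Wbeta_mul_Walpha, Ry_neg_mul_Sh_mul_Ry_s7, Cbeta_mul_Sh_mul_Calpha, pauli_mul_pauli,
    trace_pauli, halfTraceIm]
  push_cast
  ring

theorem det_Wbeta_mul_Walpha (k α θ : ℝ) : (Wbeta k α θ * Walpha k α).det = -1 := by
  rw [Wbeta_mul_Walpha, Matrix.det_mul, Ry_neg_mul_Sh_mul_Ry_s7, Cbeta_mul_Sh_mul_Calpha, det_pauli,
    det_pauli]
  grind [Complex.cos_sq_add_sin_sq, Complex.I_sq]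

theorem trace_UYY (k α θ : ℝ) :
    (UYY k α θ).trace = ((2 - 4 * halfTraceIm k α θ ^ 2 : ℝ) : ℂ) := by
  rw [UYY_eq_sq, trace_sq_fin_two, trace_Wbeta_mul_Walpha, det_Wbeta_mul_Walpha, mul_pow, mul_pow,
    Complex.I_sq]
  push_cast
  ring

theorem one_sub_re_trace_UYY_div_two (k α θ : ℝ) :
    1 - (UYY k α θ).trace.re / 2 = 2 * halfTraceIm k α θ ^ 2 := by
  rw [trace_UYY, Complex.ofReal_re]
  ring

theorem tendsto_halfTraceIm_div_sq (k α θ : ℝ) :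
    Tendsto (fun x => halfTraceIm (k * x) (α * x) θ / x ^ 2) (𝓝[≠] 0)
      (𝓝 (k * (k * Real.sin θ - 2 * α))) := by
  have deriv_sin (c : ℝ) : HasDerivAt (fun x => Real.sin (c * x)) c 0 := by
    simpa using ((hasDerivAt_id (0 : ℝ)).const_mul c).sin
  have deriv_cos (c : ℝ) : HasDerivAt (fun x => Real.cos (c * x)) 0 0 := by
    simpa using ((hasDerivAt_id (0 : ℝ)).const_mul c).cos
  have deriv_bracket : HasDerivAt (fun x => Real.sin (k * x) * Real.sin θ * Real.cos (2 * α * x) -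
      Real.cos (k * x) * Real.sin (2 * α * x)) (k * Real.sin θ - 2 * α) 0 := by
    simpa using (((deriv_sin k).mul_const (Real.sin θ)).fun_mul (deriv_cos (2 * α))).fun_sub
      ((deriv_cos k).fun_mul (deriv_sin (2 * α)))
  refine ((tendsto_div_of_hasDerivAt_zero (deriv_sin k) (by simp)).mul
    (tendsto_div_of_hasDerivAt_zero deriv_bracket (by simp))).congr fun x => ?_
  rw [halfTraceIm, div_mul_div_comm, ← sq, mul_assoc 2 α x]

theorem tendsto_one_sub_re_trace_UYY_div_pow_four (k α θ : ℝ) :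
    Tendsto (fun x => (1 - (UYY (k * x) (α * x) θ).trace.re / 2) / x ^ 4) (𝓝[≠] 0)
      (𝓝 (2 * k ^ 2 * (2 * α - k * Real.sin θ) ^ 2)) := by
  convert ((tendsto_halfTraceIm_div_sq k α θ).pow 2).const_mul 2 using 2 with x
  · rw [one_sub_re_trace_UYY_div_two, div_pow, ← pow_mul, mul_div_assoc]
  · ring

open Filter Topology in
/-- Continuous-limit expansion of `d0` for the homogeneous Y–Y twisted walk:
`(1 − d0(ε))/ε² → 2k²(2α₁ − k sin θ)²` as `ε → 0⁺`. -/
theorem UYY_d0_continuous_limit (k α₁ θ : ℝ) :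
    Tendsto
      (fun ε : ℝ =>
        (1 - (UYY (k * Real.sqrt ε) (α₁ * Real.sqrt ε) θ).trace.re / 2) / ε ^ 2)
      (nhdsWithin 0 (Set.Ioi 0))
      (nhds (2 * k ^ 2 * (2 * α₁ - k * Real.sin θ) ^ 2)) := by
  refine ((tendsto_one_sub_re_trace_UYY_div_pow_four k α₁ θ).comp
    (tendsto_sqrt_nhdsGT_zero.mono_right (nhdsGT_le_nhdsNE 0))).congr' ?_
  filter_upwards [self_mem_nhdsWithin] with ε hε
  have sqrt_pow_four : Real.sqrt ε ^ 4 = ε ^ 2 := by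
    rw [pow_mul _ 2 2, Real.sq_sqrt (le_of_lt hε)]
  rw [Function.comp_apply, sqrt_pow_four]
end

section
/- For all k, α, θ ∈ ℝ, the spectrum of the alternate-twist walk is symmetric in momentum for all values of the parameters: Tr(U_XI(−k)) = Tr(U_XI(k)). -/
open Matrix Filter Topology

/-- The massless alternate-twist walk unitary at momentum `k`, coin angle `α`
and twist angle `θ`: `U_XI = W_{β2} · W_α · W_{β1} · W_α` with `W_α = S(k)·Cα`,
`W_{β1} = R_x(−θ)·S(k)·R_x(θ)·Cβ` and `W_{β2} = S(k)·Cβ`. -/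
noncomputable def UXI (k α θ : ℝ) : Matrix (Fin 2) (Fin 2) ℂ :=
  (Sh k * Cbeta α) * (Sh k * Calpha α) *
    (Rx (-θ) * Sh k * Rx θ * Cbeta α) * (Sh k * Calpha α)

/-! Conjugation by `σx` exchanges the two diagonal entries of the shift, hence reverses the
momentum. It fixes the x-rotations and `Cβ`, and changes the sign of `Cα`, which occurs twice in
the walk. So `U_XI(k)` and `U_XI(−k)` are similar. -/

theorem trace_eq_of_semiconjBy {n R : Type*} [Fintype n] [DecidableEq n] [CommSemiring R]
    {P A B : Matrix n n R} (hP : IsUnit P) (h : SemiconjBy P A B) : A.trace = B.trace := by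
  obtain ⟨u, rfl⟩ := hP
  calc A.trace = (↑u * A * ↑u⁻¹ : Matrix n n R).trace := (trace_units_conj u A).symm
    _ = B.trace := by rw [h.eq, Units.mul_inv_cancel_right]

theorem isUnit_σx : IsUnit σx :=
  .of_mul_eq_one σx (by simp [σx, one_fin_two])

theorem semiconjBy_σx_Sh (κ : ℝ) : SemiconjBy σx (Sh κ) (Sh (-κ)) := by
  simp [SemiconjBy, σx, Sh]

theorem commute_σx_Rx (t : ℝ) : Commute σx (Rx t) := by
  simp [commute_iff_eq, σx, Rx]

theorem commute_σx_Cbeta (α : ℝ) : Commute σx (Cbeta α) := by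
  simp [commute_iff_eq, σx, Cbeta]

theorem semiconjBy_σx_Calpha (α : ℝ) : SemiconjBy σx (Calpha α) (-Calpha α) := by
  simp [SemiconjBy, σx, Calpha]

theorem semiconjBy_σx_UXI (k α θ : ℝ) : SemiconjBy σx (UXI k α θ) (UXI (-k) α θ) := by
  have hS := semiconjBy_σx_Sh k
  have hR (t : ℝ) : SemiconjBy σx (Rx t) (Rx t) := commute_σx_Rx t
  have hβ : SemiconjBy σx (Cbeta α) (Cbeta α) := commute_σx_Cbeta α
  have hα : SemiconjBy σx (Sh k * Calpha α) (-(Sh (-k) * Calpha α)) := by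
    simpa only [mul_neg] using hS.mul_right (semiconjBy_σx_Calpha α)
  have hβ₁ : SemiconjBy σx (Rx (-θ) * Sh k * Rx θ * Cbeta α)
      (Rx (-θ) * Sh (-k) * Rx θ * Cbeta α) :=
    (((hR (-θ)).mul_right hS).mul_right (hR θ)).mul_right hβ
  have hβ₂ : SemiconjBy σx (Sh k * Cbeta α) (Sh (-k) * Cbeta α) := hS.mul_right hβ
  simpa only [UXI, mul_neg, neg_mul, neg_neg] using
    ((hβ₂.mul_right hα).mul_right hβ₁).mul_right hα

/-- The spectrum of the alternate-twist walk is symmetric in momentum for all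
parameter values: `Tr U_XI(−k) = Tr U_XI(k)`. -/
theorem trace_UXI_symm (k α θ : ℝ) :
    (UXI (-k) α θ).trace = (UXI k α θ).trace :=
  (trace_eq_of_semiconjBy isUnit_σx (semiconjBy_σx_UXI k α θ)).symm
end

section
/- For all α, θ ∈ ℝ, at the edge of the Brillouin zone the alternate-twist walk satisfies Tr(U_XI(π/2))/2 = cos θ (as a complex number, with cos θ coerced to ℂ), independently of the coin angle α. Hence the twist opens a spectral gap of size 2θ at k = ±π/2, removing the Fermion-doubling degeneracy. -/
open Matrix Filter Topology

lemma Rx_add (s t : ℝ) : Rx (s + t) = Rx s * Rx t := by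
  simp only [Rx, mul_fin_two, add_div, Real.cos_add, Real.sin_add]
  push_cast
  ext i j
  fin_cases i <;> fin_cases j <;> dsimp <;> grind [Complex.I_sq]

lemma trace_Rx (t : ℝ) : (Rx t).trace = 2 * (Real.cos (t / 2) : ℂ) := by
  rw [Rx, trace_fin_two_of, two_mul]

lemma σz_mul_σz : σz * σz = 1 := by
  simp [σz, one_fin_two]

lemma Rx_mul_σz (t : ℝ) : Rx t * σz = σz * Rx (-t) := by
  simp [Rx, σz, neg_div]

lemma σz_mul_Rx_mul_σz_mul_Rx (s t : ℝ) : σz * Rx s * (σz * Rx t) = Rx (t - s) := by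
  calc σz * Rx s * (σz * Rx t) = σz * (Rx s * σz) * Rx t := by simp only [mul_assoc]
    _ = σz * σz * (Rx (-s) * Rx t) := by simp only [Rx_mul_σz, mul_assoc]
    _ = Rx (t - s) := by rw [σz_mul_σz, one_mul, ← Rx_add, neg_add_eq_sub]

lemma Sh_pi_div_two : Sh (Real.pi / 2) = Complex.I • σz := by
  have exp_edge : Complex.exp (Complex.I * (Real.pi / 2 : ℝ)) = Complex.I := by
    rw [mul_comm, Complex.ofReal_div, Complex.ofReal_ofNat, Complex.exp_pi_div_two_mul_I]
  rw [Sh, Complex.exp_neg, exp_edge, Complex.inv_I]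
  simp [σz]

lemma Calpha_eq_σz_mul_Rx (α : ℝ) : Calpha α = σz * Rx (Real.pi - 2 * α) := by
  have half_angle : (Real.pi - 2 * α) / 2 = Real.pi / 2 - α := by ring
  simp only [Calpha, σz, Rx, half_angle, Real.cos_pi_div_two_sub, Real.sin_pi_div_two_sub]
  simp

lemma Sh_pi_div_two_mul_Calpha (α : ℝ) :
    Sh (Real.pi / 2) * Calpha α = Complex.I • Rx (Real.pi - 2 * α) := by
  rw [Sh_pi_div_two, Calpha_eq_σz_mul_Rx, smul_mul_assoc, ← mul_assoc, σz_mul_σz, one_mul]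

lemma Rx_neg_mul_Sh_pi_div_two_mul_Rx (θ : ℝ) :
    Rx (-θ) * Sh (Real.pi / 2) * Rx θ = Complex.I • (σz * Rx (2 * θ)) := by
  rw [Sh_pi_div_two, mul_smul_comm, Rx_mul_σz, neg_neg, smul_mul_assoc, mul_assoc, ← Rx_add,
    two_mul]

lemma twisted_half_walk_at_BZ_edge (α θ : ℝ) :
    Rx (-θ) * Sh (Real.pi / 2) * Rx θ * Cbeta α * (Sh (Real.pi / 2) * Calpha α) =
      σz * Rx (2 * θ + (Real.pi - 4 * α)) := by
  have angle_sum :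
      2 * θ + (Real.pi - 4 * α) = 2 * θ + -(2 * α) + (Real.pi - 2 * α) := by ring
  rw [Rx_neg_mul_Sh_pi_div_two_mul_Rx, Cbeta_eq_neg_Rx, Sh_pi_div_two_mul_Calpha, angle_sum,
    Rx_add, Rx_add]
  simp [smul_smul, mul_assoc]

lemma untwisted_half_walk_at_BZ_edge (α : ℝ) :
    Sh (Real.pi / 2) * Cbeta α * (Sh (Real.pi / 2) * Calpha α) =
      σz * Rx (Real.pi - 4 * α) := by
  simpa [Rx_zero] using twisted_half_walk_at_BZ_edge α 0

theorem UXI_at_BZ_edge (α θ : ℝ) : UXI (Real.pi / 2) α θ = Rx (2 * θ) := by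
  rw [UXI, untwisted_half_walk_at_BZ_edge, mul_assoc, twisted_half_walk_at_BZ_edge,
    σz_mul_Rx_mul_σz_mul_Rx, add_sub_cancel_right]

/-- At the edge of the Brillouin zone the alternate-twist walk satisfies
`Tr(U_XI(π/2))/2 = cos θ`, independently of the coin angle `α`: the twist
opens a spectral gap removing the Fermion-doubling degeneracy. -/
theorem trace_UXI_at_BZ_edge (α θ : ℝ) :
    (UXI (Real.pi / 2) α θ).trace / 2 = ((Real.cos θ : ℝ) : ℂ) := by
  rw [UXI_at_BZ_edge, trace_Rx, mul_div_cancel_left₀ θ two_ne_zero,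
    mul_div_cancel_left₀ _ two_ne_zero]
end

section
/- Fix k, α₁, θ₁ ∈ ℝ. For ε > 0 let d0(ε) = Re(Tr(U_XI(k·√ε)))/2, where the walk unitary U_XI is taken with coin angle α = α₁·√ε and twist angle θ = θ₁·√ε. Then the continuous-limit energy spectrum is linear in k: lim_{ε→0⁺} arccos(d0(ε))/(2ε) = |k|·|2α₁ + θ₁/2|. -/
open Matrix Filter Topology

/-!
Writing `T k φ = R_x(-φ) S(k) R_x(φ)`, one has `Cβ = -R_x(-2α)` and `Cα = σy R_x(-2α)`, while moving
`σy` through `T k φ` flips the signs of `k` and `φ`. Up to cyclic permutation the walk `U_XI` is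
therefore `T k θ * T k (2α) * T (-k) 0 * T (-k) (-2α)`, a product of four rotations by angles `±2k`
about coplanar axes. Its half-trace `d0` is elementary and satisfies
`(1 - d0) / 2 = sin² k (sin² (θ / 2) + cos² k sin 2α (sin 2α + sin θ))`. When `k`, `α`, `θ` are
scaled by `t = √ε` this is `t⁴ (k (2α + θ / 2))² + o(t⁴)`, and since
`arccos d = 2 arcsin √((1 - d) / 2)`, the energy is asymptotic to the square root of that quantity.
-/

section TraceFormula

/-- The shift `S(k)` conjugated by a twist `R_x(φ)`: the rotation of angle `-2k` about the axis
`cos φ • z + sin φ • y`. -/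
noncomputable def twistedShift (k φ : ℝ) : Matrix (Fin 2) (Fin 2) ℂ :=
  Rx (-φ) * Sh k * Rx φ

lemma twistedShift_zero (k : ℝ) : twistedShift k 0 = Sh k := by
  simp [twistedShift, Rx_zero]

lemma Sh_eq_cos_sin (k : ℝ) :
    Sh k = !![Real.cos k + Real.sin k * Complex.I, 0;
              0, Real.cos k - Real.sin k * Complex.I] := by
  simp [Sh, mul_comm Complex.I, ← neg_mul, Complex.exp_mul_I, sub_eq_add_neg]

lemma twistedShift_eq_cos_sin (k φ : ℝ) :
    twistedShift k φ =
      !![Real.cos k + Real.sin k * Real.cos φ * Complex.I, Real.sin k * Real.sin φ;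
         -(Real.sin k * Real.sin φ), Real.cos k - Real.sin k * Real.cos φ * Complex.I] := by
  obtain ⟨ψ, rfl⟩ : ∃ ψ, φ = 2 * ψ := ⟨φ / 2, by ring⟩
  have hψ : (Real.sin ψ : ℂ) ^ 2 + (Real.cos ψ : ℂ) ^ 2 = 1 := mod_cast Real.sin_sq_add_cos_sq ψ
  have hI := Complex.I_sq
  rw [Real.cos_two_mul', Real.sin_two_mul]
  simp only [twistedShift, Sh_eq_cos_sin, Rx, neg_div, mul_div_cancel_left₀ ψ (two_ne_zero' ℝ),
    Real.cos_neg, Real.sin_neg, Matrix.mul_fin_two]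
  push_cast at hψ ⊢
  congrm !![?_, ?_; ?_, ?_] <;> grind

lemma σy_mul_self : σy * σy = 1 := by
  simp [σy, Matrix.one_fin_two]

lemma σy_mul_Rx (t : ℝ) : σy * Rx t = Rx (-t) * σy := by
  ext i j
  fin_cases i <;> fin_cases j <;> simp [σy, Rx, neg_div, mul_comm]

lemma σy_mul_Sh (k : ℝ) : σy * Sh k = Sh (-k) * σy := by
  ext i j
  fin_cases i <;> fin_cases j <;> simp [σy, Sh, mul_comm]

lemma σy_mul_twistedShift (k φ : ℝ) : σy * twistedShift k φ = twistedShift (-k) (-φ) * σy := by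
  rw [twistedShift, mul_assoc, ← mul_assoc, σy_mul_Rx, mul_assoc, ← mul_assoc σy, σy_mul_Sh,
    mul_assoc _ σy, σy_mul_Rx, twistedShift]
  simp only [mul_assoc]

lemma Cbeta_mul_Sh_mul_Calpha_s15 (k α : ℝ) :
    Cbeta α * Sh k * Calpha α = -(twistedShift k (2 * α) * σy) := by
  rw [Cbeta_eq_neg_Rx, Calpha_eq_σy_mul_Rx, σy_mul_Rx, neg_neg, twistedShift]
  simp only [neg_mul, mul_assoc]

lemma trace_UXI_eq_trace_twistedShift (k α θ : ℝ) :
    (UXI k α θ).trace =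
      (twistedShift k θ * twistedShift k (2 * α) *
        twistedShift (-k) 0 * twistedShift (-k) (-(2 * α))).trace := by
  have conj_σy : σy * Sh k * twistedShift k (2 * α) * σy =
      twistedShift (-k) 0 * twistedShift (-k) (-(2 * α)) := by
    rw [← twistedShift_zero k, σy_mul_twistedShift, mul_assoc _ σy, σy_mul_twistedShift, mul_assoc,
      mul_assoc, σy_mul_self, mul_one, neg_zero]
  calc (UXI k α θ).trace
      = (Sh k * (Cbeta α * Sh k * Calpha α) *
          (twistedShift k θ * (Cbeta α * Sh k * Calpha α))).trace := by
        simp only [UXI, twistedShift, mul_assoc]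
    _ = (twistedShift k θ * twistedShift k (2 * α) *
          (σy * Sh k * twistedShift k (2 * α) * σy)).trace := by
        rw [Matrix.trace_mul_comm, Cbeta_mul_Sh_mul_Calpha_s15]
        simp only [mul_neg, neg_mul, neg_neg, mul_assoc]
    _ = _ := by rw [conj_σy, ← mul_assoc]

-- As quaternions, unit vectors `u, v, w, z` of one plane at angles `a, b, c, d` have products with
-- scalar parts `re (u v) = -cos (a - b)` and `re (u v w z) = cos ((a - b) + (c - d))`.
lemma trace_mul_twistedShift (k a b c d : ℝ) :
    (twistedShift k a * twistedShift k b * twistedShift (-k) c * twistedShift (-k) d).trace =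
      ((2 * (Real.cos k ^ 4 + Real.cos k ^ 2 * Real.sin k ^ 2 *
          (Real.cos (a - c) + Real.cos (a - d) + Real.cos (b - c) + Real.cos (b - d)
            - Real.cos (a - b) - Real.cos (c - d))
        + Real.sin k ^ 4 * Real.cos ((a - b) + (c - d))) : ℝ) : ℂ) := by
  simp only [twistedShift_eq_cos_sin, Real.cos_add, Real.cos_sub, Real.sin_sub, Real.cos_neg,
    Real.sin_neg, Matrix.mul_fin_two, Matrix.trace_fin_two_of]
  push_cast
  grind [Complex.I_sq]

lemma half_re_trace_UXI (k α θ : ℝ) :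
    (UXI k α θ).trace.re / 2 =
      Real.cos k ^ 4 + Real.sin k ^ 4 * Real.cos θ + Real.cos k ^ 2 * Real.sin k ^ 2 *
        (Real.cos θ + Real.cos (2 * (2 * α)) - 2 * Real.sin (2 * α) * Real.sin θ) := by
  rw [trace_UXI_eq_trace_twistedShift, trace_mul_twistedShift, Complex.ofReal_re,
    show (θ - 2 * α) + (0 - -(2 * α)) = θ by ring, show 2 * α - -(2 * α) = 2 * (2 * α) by ring]
  simp only [sub_zero, sub_neg_eq_add, zero_add, Real.cos_add θ, Real.cos_sub θ]
  ring

lemma one_sub_half_re_trace_UXI (k α θ : ℝ) :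
    (1 - (UXI k α θ).trace.re / 2) / 2 =
      Real.sin k ^ 2 * (Real.sin (θ / 2) ^ 2 +
        Real.cos k ^ 2 * (Real.sin (2 * α) * (Real.sin (2 * α) + Real.sin θ))) := by
  rw [half_re_trace_UXI, Real.sin_sq_eq_half_sub (θ / 2), mul_div_cancel₀ θ (two_ne_zero' ℝ),
    Real.cos_two_mul' (2 * α), Real.cos_sq' (2 * α), pow_mul (Real.sin k) 2 2, Real.sin_sq k]
  ring

end TraceFormula

section Asymptotics

-- The junk values of `arccos`, `arcsin` and `√` make this true even outside `[-1, 1]`.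
lemma arccos_eq_two_mul_arcsin_sqrt (x : ℝ) :
    Real.arccos x = 2 * Real.arcsin √((1 - x) / 2) := by
  rcases le_total 1 x with hx | hx
  · rw [Real.arccos_of_one_le hx, Real.sqrt_eq_zero_of_nonpos (by linarith), Real.arcsin_zero,
      mul_zero]
  rcases le_total x (-1) with hx' | hx'
  · rw [Real.arccos_of_le_neg_one hx', Real.arcsin_of_one_le (Real.one_le_sqrt.2 (by linarith)),
      mul_div_cancel₀ _ two_ne_zero]
  have h_nonneg := Real.arccos_nonneg x
  have h_le := Real.arccos_le_pi x
  have h_sin : Real.sin (Real.arccos x / 2) = √((1 - x) / 2) := by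
    rw [Real.sin_half_eq_sqrt h_nonneg (by linarith), Real.cos_arccos hx' hx]
  rw [← h_sin, Real.arcsin_sin (by linarith) (by linarith), mul_div_cancel₀ _ two_ne_zero]

open Asymptotics in
lemma isEquivalent_arcsin : Real.arcsin ~[𝓝 0] id := by
  simpa using! (Real.hasDerivAt_arcsin (x := 0) (by norm_num) (by norm_num)).isLittleO

lemma tendsto_arccos_div_two_mul {ι : Type*} {l : Filter ι} {d g : ι → ℝ} {L : ℝ}
    (hg : Tendsto g l (𝓝[>] 0)) (hd : Tendsto (fun i => (1 - d i) / 2 / g i ^ 2) l (𝓝 L)) :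
    Tendsto (fun i => Real.arccos (d i) / (2 * g i)) l (𝓝 √L) := by
  obtain ⟨hg_zero, hg_pos⟩ := tendsto_nhdsWithin_iff.1 hg
  have h_ratio : Tendsto (fun i => √((1 - d i) / 2) / g i) l (𝓝 √L) := by
    refine hd.sqrt.congr' (hg_pos.mono fun i (hi : 0 < g i) => ?_)
    rw [Real.sqrt_div' _ (sq_nonneg _), Real.sqrt_sq hi.le]
  have h_arg : Tendsto (fun i => √((1 - d i) / 2)) l (𝓝 0) := by
    have h_mul := h_ratio.mul hg_zero
    rw [mul_zero] at h_mul
    exact h_mul.congr' (hg_pos.mono fun i (hi : 0 < g i) => div_mul_cancel₀ _ hi.ne')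
  refine (((isEquivalent_arcsin.comp_tendsto h_arg).div .refl).symm.tendsto_nhds h_ratio).congr
    fun i => ?_
  rw [arccos_eq_two_mul_arcsin_sqrt, mul_div_mul_left _ _ two_ne_zero]
  rfl

lemma tendsto_sin_mul_div_self (c : ℝ) :
    Tendsto (fun t => Real.sin (c * t) / t) (𝓝[≠] 0) (𝓝 c) := by
  have h_deriv : HasDerivAt (fun t => Real.sin (c * t)) c 0 := by
    simpa using ((hasDerivAt_id (0 : ℝ)).const_mul c).sin
  simpa [div_eq_inv_mul] using h_deriv.tendsto_slope_zero

lemma tendsto_one_sub_half_re_trace_UXI_div (k α θ : ℝ) :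
    Tendsto (fun t => (1 - (UXI (k * t) (α * t) (θ * t)).trace.re / 2) / 2 / t ^ 4)
      (𝓝[≠] 0) (𝓝 ((k * (2 * α + θ / 2)) ^ 2)) := by
  have h_cos : Tendsto (fun t => Real.cos (k * t)) (𝓝[≠] 0) (𝓝 1) := by
    have h_cont : Continuous fun t => Real.cos (k * t) := by fun_prop
    exact (h_cont.tendsto' 0 1 (by simp)).mono_left nhdsWithin_le_nhds
  have h_sin := tendsto_sin_mul_div_self
  have h_lim := ((h_sin k).pow 2).mul <| ((h_sin (θ / 2)).pow 2).add <|
    (h_cos.pow 2).mul <| (h_sin (2 * α)).mul <| (h_sin (2 * α)).add (h_sin θ)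
  have h_value : k ^ 2 * ((θ / 2) ^ 2 + 1 ^ 2 * (2 * α * (2 * α + θ))) =
      (k * (2 * α + θ / 2)) ^ 2 := by ring
  rw [← h_value]
  refine h_lim.congr' ?_
  filter_upwards [self_mem_nhdsWithin] with t (ht : t ≠ 0)
  rw [one_sub_half_re_trace_UXI, mul_div_right_comm θ t, ← mul_assoc 2 α t]
  field_simp

end Asymptotics

open Filter Topology in
/-- Continuous-limit energy spectrum of the alternate-twist walk is linear in
momentum: `arccos(d0(ε))/(2ε) → |k|·|2α₁ + θ₁/2|` as `ε → 0⁺`. -/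
theorem UXI_spectrum_continuous_limit (k α₁ θ₁ : ℝ) :
    Tendsto
      (fun ε : ℝ =>
        Real.arccos
          ((UXI (k * Real.sqrt ε) (α₁ * Real.sqrt ε) (θ₁ * Real.sqrt ε)).trace.re / 2)
          / (2 * ε))
      (nhdsWithin 0 (Set.Ioi 0))
      (nhds (|k| * |2 * α₁ + θ₁ / 2|)) := by
  have h_sqrt : Tendsto Real.sqrt (𝓝[>] 0) (𝓝[≠] 0) :=
    tendsto_nhdsWithin_iff.2
      ⟨(Real.continuous_sqrt.tendsto' 0 0 Real.sqrt_zero).mono_left nhdsWithin_le_nhds,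
        eventually_mem_nhdsWithin.mono fun ε hε => (Real.sqrt_pos.2 hε).ne'⟩
  rw [← abs_mul, ← Real.sqrt_sq_eq_abs]
  refine tendsto_arccos_div_two_mul tendsto_id <|
    ((tendsto_one_sub_half_re_trace_UXI_div k α₁ θ₁).comp h_sqrt).congr' ?_
  filter_upwards [self_mem_nhdsWithin] with ε (hε : 0 < ε)
  have h_pow : √ε ^ 4 = ε ^ 2 := by rw [pow_mul √ε 2 2, Real.sq_sqrt hε.le]
  simp only [Function.comp_apply, h_pow]
end
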